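/- Any bounded below acyclic cochain complex in an abelian category A with exact coproducts is coacyclic, and any bounded above acyclic complex in an abelian category with exact products is contraacyclic. -/

import Mathlib

open CategoryTheory CategoryTheory.Limits CategoryTheory.Pretriangulated

variable {A : Type u} [Category.{v} A] [Abelian A]

/-- The totalization of a (short exact) sequence of complexes `K ⟶ L ⟶ M`, realized
(up to isomorphism in the homotopy category) as a shifted mapping cone of the canonical
map `Cone(f) ⟶ M`. -/
noncomputable def totSES {K L M : CochainComplex A ℤ} (f : K ⟶ L) (g : L ⟶ M)
    (hfg : f ≫ g = 0) : CochainComplex A ℤ :=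
  (CochainComplex.mappingCone
    (CochainComplex.mappingCone.desc f 0 g (by simp [hfg])))⟦(-1 : ℤ)⟧

/-- A class of objects of the homotopy category which contains the totalizations of all
degreewise short exact sequences of complexes and is thick: closed under isomorphisms,
zero objects, shifts, extensions (cones) and direct summands. -/
structure TotClosed (P : HomotopyCategory A (ComplexShape.up ℤ) → Prop) : Prop where
  tot : ∀ {K L M : CochainComplex A ℤ} (f : K ⟶ L) (g : L ⟶ M) (hfg : f ≫ g = 0),
    (ShortComplex.mk f g hfg).ShortExact →
    P ((HomotopyCategory.quotient A (ComplexShape.up ℤ)).obj (totSES f g hfg))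
  zero : ∀ (X : HomotopyCategory A (ComplexShape.up ℤ)), IsZero X → P X
  iso : ∀ {X Y : HomotopyCategory A (ComplexShape.up ℤ)}, (X ≅ Y) → P X → P Y
  shift : ∀ (X : HomotopyCategory A (ComplexShape.up ℤ)) (n : ℤ), P X → P (X⟦n⟧)
  ext₂ : ∀ (T : Triangle (HomotopyCategory A (ComplexShape.up ℤ))),
    T ∈ distinguishedTriangles → P T.obj₁ → P T.obj₃ → P T.obj₂
  smd : ∀ (X Y : HomotopyCategory A (ComplexShape.up ℤ)), P (X ⊞ Y) → P X

/-- A complex is absolutely acyclic if its image in the homotopy category belongs to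
the minimal thick subcategory containing the totalizations of short exact sequences. -/
def IsAbsolutelyAcyclic (X : HomotopyCategory A (ComplexShape.up ℤ)) : Prop :=
  ∀ P, TotClosed P → P X

/-- Closure under all existing coproducts. -/
def CoprodClosed (P : HomotopyCategory A (ComplexShape.up ℤ) → Prop) : Prop :=
  ∀ {ι : Type v} (F : ι → HomotopyCategory A (ComplexShape.up ℤ))
    (c : Cofan F), IsColimit c → (∀ i, P (F i)) → P c.pt

/-- A complex is coacyclic if its image in the homotopy category belongs to every thick
class containing the totalizations which is moreover closed under coproducts. -/
def IsCoacyclic (X : HomotopyCategory A (ComplexShape.up ℤ)) : Prop :=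
  ∀ P, TotClosed P → CoprodClosed P → P X


/-- Closure under all existing products. -/
def ProdClosed (P : HomotopyCategory A (ComplexShape.up ℤ) → Prop) : Prop :=
  ∀ {ι : Type v} (F : ι → HomotopyCategory A (ComplexShape.up ℤ))
    (c : Fan F), IsLimit c → (∀ i, P (F i)) → P c.pt

/-- A complex is contraacyclic if its image in the homotopy category belongs to every
thick class containing the totalizations which is moreover closed under products. -/
def IsContraacyclic (X : HomotopyCategory A (ComplexShape.up ℤ)) : Prop :=
  ∀ P, TotClosed P → ProdClosed P → P X

/-!
Let `C` be acyclic and bounded below. Each canonical truncation `τ≤n C` is bounded and acyclic,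
hence an iterated extension of acyclic complexes with two nonzero terms, and those are contractible.
In every degree the sequence `τ≤0 C ⟶ τ≤1 C ⟶ ⋯ ⟶ C` is eventually constant, so by a
Mittag-Leffler argument `1 - shift` is a degreewise split monomorphism in
`0 ⟶ ∐ τ≤n C ⟶ ∐ τ≤n C ⟶ C ⟶ 0`, and this telescope is short exact. Thus `C` belongs to every class
of complexes which contains the contractible ones, has the two-out-of-three property for short exact
sequences and is closed under countable coproducts. Such classes are self-dual up to exchanging
coproducts and products, which gives the bounded above case in the opposite category. They arise
from classes of objects of the homotopy category because homotopies can be glued along coproducts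
and products.
-/

lemma exists_sub_apply_succ_eq_of_surjective {G : ℕ → Type*} [∀ n, AddCommGroup (G n)]
    (φ : ∀ n, G (n + 1) →+ G n) {N : ℕ} (hφ : ∀ n, N ≤ n → Function.Surjective (φ n))
    (x : ∀ n, G n) : ∃ r : ∀ n, G n, ∀ n, r n - φ n (r (n + 1)) = x n := by
  induction N generalizing G with
  | zero =>
    choose s hs using fun n => hφ n n.zero_le
    exact ⟨fun n => n.rec 0 fun n r => s n (r - x n), fun n => by simp [hs]⟩
  | succ N ih =>
    obtain ⟨r, hr⟩ := ih (fun n => φ (n + 1)) (fun n hn => hφ (n + 1) (by lia))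
      (fun n => x (n + 1))
    refine ⟨fun n => n.casesOn (x 0 + φ 0 (r 0)) r, ?_⟩
    rintro (_ | n)
    · simp
    · exact hr n

section Telescope

variable {B : Type*} [Category* B] [Preadditive B] {F : ℕ ⥤ B} {c : Cofan F.obj}

/-- The map `1 - shift` on the coproduct of the terms of a sequence `F 0 ⟶ F 1 ⟶ ⋯`; its
cokernel is the colimit of the sequence. -/
noncomputable def telescopeMap (hc : IsColimit c) : c.pt ⟶ c.pt :=
  Cofan.IsColimit.desc hc fun n => c.inj n - F.map (homOfLE n.le_succ) ≫ c.inj (n + 1)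

lemma inj_telescopeMap (hc : IsColimit c) (n : ℕ) :
    c.inj n ≫ telescopeMap hc = c.inj n - F.map (homOfLE n.le_succ) ≫ c.inj (n + 1) :=
  Cofan.IsColimit.fac hc _ n

lemma telescopeMap_comp_desc (hc : IsColimit c) (s : Cocone F) :
    telescopeMap hc ≫ Cofan.IsColimit.desc hc s.ι.app = 0 :=
  Cofan.IsColimit.hom_ext hc _ _ fun n => by
    rw [← Category.assoc, inj_telescopeMap, Preadditive.sub_comp, Category.assoc,
      Cofan.IsColimit.fac, Cofan.IsColimit.fac, s.w, sub_self, comp_zero]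

lemma map_telescopeMap {D : Type*} [Category* D] [Preadditive D] (G : B ⥤ D) [G.Additive]
    (hc : IsColimit c)
    (hc' : IsColimit (Cofan.mk (G.obj c.pt) fun n => G.map (c.inj n) : Cofan (F ⋙ G).obj)) :
    G.map (telescopeMap hc) = telescopeMap hc' :=
  Cofan.IsColimit.hom_ext hc' _ _ fun n => by
    rw [inj_telescopeMap]
    simp [← Functor.map_comp, inj_telescopeMap, Functor.map_sub]

/-- A morphism out of the coproduct which kills `1 - shift` is a cocone over the sequence, so
the map to the colimit is the cokernel of `1 - shift`. -/
noncomputable def isColimitCokernelTelescope (hc : IsColimit c) {s : Cocone F} (hs : IsColimit s) :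
    IsColimit (CokernelCofork.ofπ _ (telescopeMap_comp_desc hc s)) := by
  refine CokernelCofork.IsColimit.ofπ _ _
    (fun {Z} h hh => hs.desc ⟨Z, NatTrans.ofSequence (fun n => c.inj n ≫ h) fun n => ?_⟩)
    (fun h hh => Cofan.IsColimit.hom_ext hc _ _ fun n => ?_)
    (fun h hh m hm => hs.hom_ext fun n => ?_)
  · have : c.inj n ≫ telescopeMap hc ≫ h = 0 := by rw [hh, comp_zero]
    rw [← Category.assoc, inj_telescopeMap, Preadditive.sub_comp, sub_eq_zero] at this
    simpa using this.symm
  · rw [← Category.assoc, Cofan.IsColimit.fac, hs.fac, NatTrans.ofSequence_app]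
  · rw [hs.fac, NatTrans.ofSequence_app, ← hm, ← Category.assoc, Cofan.IsColimit.fac]

lemma isSplitMono_telescopeMap (hc : IsColimit c) {N : ℕ}
    (hF : ∀ n, N ≤ n → IsSplitMono (F.map (homOfLE n.le_succ))) :
    IsSplitMono (telescopeMap hc) := by
  obtain ⟨r, hr⟩ := exists_sub_apply_succ_eq_of_surjective
    (fun n => Preadditive.leftComp c.pt (F.map (homOfLE n.le_succ))) (N := N)
    (fun n hn f => by
      have := hF n hn
      exact ⟨retraction (F.map (homOfLE n.le_succ)) ≫ f, IsSplitMono.id_assoc _ f⟩) c.inj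
  refine ⟨⟨Cofan.IsColimit.desc hc r, Cofan.IsColimit.hom_ext hc _ _ fun n => ?_⟩⟩
  rw [← Category.assoc, inj_telescopeMap, Preadditive.sub_comp, Category.assoc,
    Cofan.IsColimit.fac, Cofan.IsColimit.fac, Category.comp_id]
  exact hr n

end Telescope

section Eval

variable {V : Type*} [Category* V] {ι : Type*} {w : ComplexShape ι}

/-- Colimits of complexes are computed degreewise; here for coproducts. -/
noncomputable def isColimitCofanEval [Preadditive V] {J : Type*} [HasColimitsOfShape (Discrete J) V]
    {K : J → HomologicalComplex V w} {c : Cofan K} (hc : IsColimit c) (i : ι) :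
    IsColimit (Cofan.mk (c.pt.X i) fun j => (c.inj j).f i : Cofan fun j => (K j).X i) :=
  Cofan.isColimitMapCoconeEquiv _ _ _ (isColimitOfPreserves (HomologicalComplex.eval V w i) hc)

/-- Limits of complexes are computed degreewise; here for products. -/
noncomputable def isLimitFanEval [Preadditive V] {J : Type*} [HasLimitsOfShape (Discrete J) V]
    {K : J → HomologicalComplex V w} {c : Fan K} (hc : IsLimit c) (i : ι) :
    IsLimit (Fan.mk (c.pt.X i) fun j => (c.proj j).f i : Fan fun j => (K j).X i) :=
  Fan.isLimitMapConeEquiv _ _ _ (isLimitOfPreserves (HomologicalComplex.eval V w i) hc)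

lemma telescope_shortExact [Abelian V] [HasColimitsOfShape (Discrete ℕ) V]
    {F : ℕ ⥤ HomologicalComplex V w} {c : Cofan F.obj} (hc : IsColimit c) (s : Cocone F)
    (hs : ∀ i, ∃ N, ∀ n, N ≤ n → IsIso ((s.ι.app n).f i)) :
    (ShortComplex.mk _ _ (telescopeMap_comp_desc hc s)).ShortExact := by
  let ev := HomologicalComplex.eval V w
  have hs' (i : ι) : ∃ N, ∀ n, N ≤ n → IsIso (((ev i).mapCocone s).ι.app n) := hs i
  choose N hN using hs'
  have hF (i : ι) : (F ⋙ ev i).IsEventuallyConstantFrom (N i) := fun n f => by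
    have := hN i _ le_rfl
    have := hN i n (leOfHom f)
    exact IsIso.of_isIso_fac_right (((ev i).mapCocone s).w f)
  have hcolim : IsColimit s := HomologicalComplex.isColimitOfEval _ _ fun i => by
    have := hN i _ le_rfl
    exact (hF i).isColimitOfIsIso ((ev i).mapCocone s)
  have : Mono (telescopeMap hc) := HomologicalComplex.mono_of_mono_f _ fun i => by
    have : IsSplitMono ((ev i).map (telescopeMap hc)) := by
      rw [map_telescopeMap (ev i) hc (isColimitCofanEval hc i)]
      refine isSplitMono_telescopeMap _ (N := N i) fun n hn => ?_
      have := (hF i).isIso_map (homOfLE n.le_succ) (homOfLE hn)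
      infer_instance
    exact inferInstanceAs (Mono ((ev i).map (telescopeMap hc)))
  have hcoker := isColimitCokernelTelescope hc hcolim
  have : Epi (Cofan.IsColimit.desc hc s.ι.app) := epi_of_isColimit_cofork hcoker
  exact ⟨ShortComplex.exact_of_g_is_cokernel _ hcoker⟩

end Eval

section HomotopyCategory

variable {V : Type*} [Category* V] [Preadditive V] {ι : Type*} {w : ComplexShape ι}
  {J : Type*} {K : J → HomologicalComplex V w} {L : HomologicalComplex V w}

/-- Homotopies on the summands of a coproduct of complexes glue to a homotopy. -/
noncomputable def homotopyOfCofan [HasColimitsOfShape (Discrete J) V] {c : Cofan K}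
    (hc : IsColimit c) {f g : c.pt ⟶ L} (h : ∀ j, Homotopy (c.inj j ≫ f) (c.inj j ≫ g)) :
    Homotopy f g where
  hom i k := Cofan.IsColimit.desc (isColimitCofanEval hc i) fun j => (h j).hom i k
  zero i k hik := Cofan.IsColimit.hom_ext (isColimitCofanEval hc i) _ _ fun j => by
    rw [Cofan.IsColimit.fac, (h j).zero i k hik, comp_zero]
  comm i := Cofan.IsColimit.hom_ext (isColimitCofanEval hc i) _ _ fun j => by
    have fac (i k : ι) := Cofan.IsColimit.fac (isColimitCofanEval hc i) fun j => (h j).hom i k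
    dsimp only [Cofan.mk_pt, cofan_mk_inj] at fac ⊢
    rw [Preadditive.comp_add, Preadditive.comp_add, ← dNext_comp_left, ← prevD_comp_left]
    simp only [fac]
    simpa using (h j).comm i

/-- Homotopies on the factors of a product of complexes glue to a homotopy. -/
noncomputable def homotopyOfFan [HasLimitsOfShape (Discrete J) V] {c : Fan K}
    (hc : IsLimit c) {f g : L ⟶ c.pt} (h : ∀ j, Homotopy (f ≫ c.proj j) (g ≫ c.proj j)) :
    Homotopy f g where
  hom i k := Fan.IsLimit.lift (isLimitFanEval hc k) fun j => (h j).hom i k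
  zero i k hik := Fan.IsLimit.hom_ext (isLimitFanEval hc k) _ _ fun j => by
    rw [Fan.IsLimit.fac, (h j).zero i k hik, zero_comp]
  comm i := Fan.IsLimit.hom_ext (isLimitFanEval hc i) _ _ fun j => by
    have fac (i k : ι) := Fan.IsLimit.fac (isLimitFanEval hc k) fun j => (h j).hom i k
    dsimp only [Fan.mk_pt, fan_mk_proj] at fac ⊢
    rw [Preadditive.add_comp, Preadditive.add_comp, ← dNext_comp_right, ← prevD_comp_right]
    simp only [fac]
    simpa using (h j).comm i

instance preservesColimitsOfShape_discrete_quotient [HasColimitsOfShape (Discrete J) V] :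
    PreservesColimitsOfShape (Discrete J) (HomotopyCategory.quotient V w) := by
  let q := HomotopyCategory.quotient V w
  have (K : J → HomologicalComplex V w) : PreservesColimit (Discrete.functor K) q := by
    have hc := coproductIsCoproduct K
    refine preservesColimit_of_preserves_colimit_cocone hc (.ofExistsUnique ?_)
    rintro ⟨Y, s⟩
    obtain ⟨L, rfl⟩ := HomotopyCategory.quotient_obj_surjective Y
    choose f hf using fun j => q.map_surjective (s.app ⟨j⟩)
    refine ⟨q.map (Cofan.IsColimit.desc hc f), fun ⟨j⟩ => ?_, fun m hm => ?_⟩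
    · exact (q.map_comp _ _).symm.trans ((congrArg q.map (Cofan.IsColimit.fac hc f j)).trans (hf j))
    · obtain ⟨g, rfl⟩ := q.map_surjective m
      refine HomotopyCategory.eq_of_homotopy _ _ (homotopyOfCofan hc fun j =>
        HomotopyCategory.homotopyOfEq _ _ ?_)
      rw [Cofan.IsColimit.fac]
      exact (q.map_comp _ _).trans ((hm ⟨j⟩).trans (hf j).symm)
  exact preservesColimitsOfShape_of_discrete q

instance preservesLimitsOfShape_discrete_quotient [HasLimitsOfShape (Discrete J) V] :
    PreservesLimitsOfShape (Discrete J) (HomotopyCategory.quotient V w) := by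
  let q := HomotopyCategory.quotient V w
  have (K : J → HomologicalComplex V w) : PreservesLimit (Discrete.functor K) q := by
    have hc := productIsProduct K
    refine preservesLimit_of_preserves_limit_cone hc (.ofExistsUnique ?_)
    rintro ⟨Y, s⟩
    obtain ⟨L, rfl⟩ := HomotopyCategory.quotient_obj_surjective Y
    choose f hf using fun j => q.map_surjective (s.app ⟨j⟩)
    refine ⟨q.map (Fan.IsLimit.lift hc f), fun ⟨j⟩ => ?_, fun m hm => ?_⟩
    · exact (q.map_comp _ _).symm.trans ((congrArg q.map (Fan.IsLimit.fac hc f j)).trans (hf j))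
    · obtain ⟨g, rfl⟩ := q.map_surjective m
      refine HomotopyCategory.eq_of_homotopy _ _ (homotopyOfFan hc fun j =>
        HomotopyCategory.homotopyOfEq _ _ ?_)
      rw [Fan.IsLimit.fac]
      exact (q.map_comp _ _).trans ((hm ⟨j⟩).trans (hf j).symm)
  exact preservesLimitsOfShape_of_discrete q

end HomotopyCategory

open Classical in
lemma nonempty_homotopy_zero_of_acyclic {K : CochainComplex A ℤ} (hK : K.Acyclic) (a : ℤ)
    [K.IsStrictlyGE a] [K.IsStrictlyLE (a + 1)] : Nonempty (Homotopy (𝟙 K) 0) := by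
  have hd_left : K.d (a - 1) a = 0 := (K.isZero_of_isStrictlyGE a (a - 1)).eq_of_src _ _
  have hd_right : K.d (a + 1) (a + 2) = 0 :=
    (K.isZero_of_isStrictlyLE (a + 1) (a + 2)).eq_of_tgt _ _
  have : Mono (K.d a (a + 1)) :=
    ((K.exactAt_iff' (a - 1) a (a + 1) (by simp) (by simp)).1 (hK a)).mono_g hd_left
  have : Epi (K.d a (a + 1)) :=
    ((K.exactAt_iff' a (a + 1) (a + 2) (by simp)
      (by simp [add_assoc, one_add_one_eq_two])).1 (hK (a + 1))).epi_f hd_right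
  have : IsIso (K.d a (a + 1)) := isIso_of_mono_of_epi _
  refine ⟨{
    hom i j := if h : j + 1 = i ∧ IsIso (K.d j i) then have := h.2; inv (K.d j i) else 0
    zero i j hij := dif_neg fun h => hij h.1
    comm i := ?_ }⟩
  rw [dNext_eq _ (show (ComplexShape.up ℤ).Rel i (i + 1) from rfl),
    prevD_eq _ (show (ComplexShape.up ℤ).Rel (i - 1) i from sub_add_cancel i 1)]
  by_cases ha : i = a
  · subst ha
    simp [hd_left, this]
  by_cases hb : i = a + 1
  · obtain rfl : a = i - 1 := by lia
    rw [sub_add_cancel] at this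
    have hd : K.d i (i + 1) = 0 := (K.isZero_of_isStrictlyLE (i - 1 + 1) (i + 1)).eq_of_tgt _ _
    simp [hd, this]
  have hi : IsZero (K.X i) := by
    rcases lt_or_ge i a with h | h
    · exact K.isZero_of_isStrictlyGE a i
    · exact K.isZero_of_isStrictlyLE (a + 1) i
  exact hi.eq_of_src _ _

section Truncation

lemma isIso_πTruncGE_f {ι ι' : Type*} {c : ComplexShape ι} {c' : ComplexShape ι'}
    (K : HomologicalComplex A c') (e : c.Embedding c') [e.IsTruncGE] {i : ι} {i' : ι'}
    (hi' : e.f i = i') (hi : ¬ e.BoundaryGE i) : IsIso ((K.πTruncGE e).f i') :=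
  (e.isIso_liftExtend_f_iff (K.restrictionToTruncGE' e)
    (K.restrictionToTruncGE'_hasLift e) hi').2 (K.isIso_restrictionToTruncGE' e i hi)

lemma isIso_ιTruncLE_f {ι ι' : Type*} {c : ComplexShape ι} {c' : ComplexShape ι'}
    (K : HomologicalComplex A c') (e : c.Embedding c') [e.IsTruncLE] {i : ι} {i' : ι'}
    (hi' : e.f i = i') (hi : ¬ e.BoundaryLE i) : IsIso ((K.ιTruncLE e).f i') := by
  have := isIso_πTruncGE_f K.op e.op hi' (by rwa [e.op_boundaryGE_iff])
  exact inferInstanceAs (IsIso ((K.op.πTruncGE e.op).f i').unop)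

variable (C : CochainComplex A ℤ)

lemma isIso_ιTruncLE_f_of_lt {n i : ℤ} (hi : i < n) :
    IsIso ((C.ιTruncLE n).f i) := by
  refine isIso_ιTruncLE_f C (ComplexShape.embeddingUpIntLE n) (i := (n - i).toNat) ?_ ?_
  · simp [hi.le]
  · rw [ComplexShape.boundaryLE_embeddingUpIntLE_iff]
    lia

/-- The inclusion between consecutive canonical truncations of `C`. -/
noncomputable def truncLESucc (n : ℕ) : C.truncLE n ⟶ C.truncLE (n + 1 : ℕ) :=
  have := (C.truncLE n).isStrictlyLE_of_le n (n + 1 : ℕ) (by lia)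
  inv ((C.truncLE n).ιTruncLE (n + 1 : ℕ)) ≫
    CochainComplex.truncLEMap (C.ιTruncLE n) (n + 1 : ℕ)

lemma truncLESucc_comp_ιTruncLE (n : ℕ) :
    truncLESucc C n ≫ C.ιTruncLE (n + 1 : ℕ) = C.ιTruncLE n := by
  simp [truncLESucc, -Nat.cast_add]

/-- The filtration `truncLE 0 ⟶ truncLE 1 ⟶ ⋯` of `C` by canonical truncations, which computes `C`
as a degreewise eventually constant colimit. -/
noncomputable def truncLECocone : Cocone (Functor.ofSequence (truncLESucc C)) where
  pt := C
  ι := NatTrans.ofSequence (fun n => C.ιTruncLE n) fun n => by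
    rw [Functor.ofSequence_map_homOfLE_succ]
    exact (truncLESucc_comp_ιTruncLE C n).trans (Category.comp_id _).symm

instance isStrictlyGE_shortComplexTruncLE_X₃ (n : ℤ) :
    (C.shortComplexTruncLE n).X₃.IsStrictlyGE n := by
  rw [CochainComplex.isStrictlyGE_iff]
  intro i hi
  have hS := C.shortComplexTruncLE_shortExact n
  have := isIso_ιTruncLE_f_of_lt C hi
  have := (hS.map_of_exact (HomologicalComplex.eval A _ i)).isIso_f_iff.1 this
  exact this

instance isStrictlyLE_shortComplexTruncLE_X₃ (n m : ℤ) [C.IsStrictlyLE m] :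
    (C.shortComplexTruncLE n).X₃.IsStrictlyLE m := by
  rw [CochainComplex.isStrictlyLE_iff]
  intro i hi
  have := (C.shortComplexTruncLE_shortExact n).epi_g
  exact (C.isZero_of_isStrictlyLE m i).of_epi ((C.shortComplexTruncLE n).g.f i)

instance isStrictlyGE_truncLE (n a : ℤ) [C.IsStrictlyGE a] : (C.truncLE n).IsStrictlyGE a :=
  inferInstanceAs ((HomologicalComplex.truncLE C
    (ComplexShape.embeddingUpIntLE n)).IsStrictlySupported (ComplexShape.embeddingUpIntGE a))

lemma acyclic_shortComplexTruncLE_X₃ {C : CochainComplex A ℤ} (hC : C.Acyclic) (n : ℤ) :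
    (C.shortComplexTruncLE n).X₃.Acyclic := by
  have : C.IsLE n := (C.isLE_iff n).2 fun i _ => hC i
  exact (C.shortComplexTruncLE_shortExact n).acyclic_X₃ (inferInstanceAs (QuasiIso (C.ιTruncLE n)))

end Truncation

/-- A class of complexes containing the contractible ones and satisfying the two-out-of-three
property for short exact sequences. Coacyclicity and contraacyclicity are tested on such classes,
and passing to the opposite category preserves them. -/
structure IsExactClass (Q : ObjectProperty (CochainComplex A ℤ)) : Prop where
  of_homotopy_zero {K : CochainComplex A ℤ} (h : Homotopy (𝟙 K) 0) : Q K
  of_shortExact₁ {S : ShortComplex (CochainComplex A ℤ)} (hS : S.ShortExact)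
    (h₂ : Q S.X₂) (h₃ : Q S.X₃) : Q S.X₁
  of_shortExact₂ {S : ShortComplex (CochainComplex A ℤ)} (hS : S.ShortExact)
    (h₁ : Q S.X₁) (h₃ : Q S.X₃) : Q S.X₂
  of_shortExact₃ {S : ShortComplex (CochainComplex A ℤ)} (hS : S.ShortExact)
    (h₁ : Q S.X₁) (h₂ : Q S.X₂) : Q S.X₃

namespace IsExactClass

variable {Q : ObjectProperty (CochainComplex A ℤ)} {K : CochainComplex A ℤ}

lemma of_isZero (hQ : IsExactClass Q) (hK : IsZero K) : Q K :=
  hQ.of_homotopy_zero (Homotopy.ofEq (hK.eq_of_src _ _))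

open ZeroObject in
lemma of_iso (hQ : IsExactClass Q) {L : CochainComplex A ℤ} (e : K ≅ L) (h : Q K) : Q L := by
  let S := ShortComplex.mk (0 : (0 : CochainComplex A ℤ) ⟶ K) e.hom zero_comp
  have hS : S.Exact := (S.exact_iff_mono rfl).2 (inferInstanceAs (Mono e.hom))
  exact hQ.of_shortExact₃ (S := S) ⟨hS⟩ (hQ.of_isZero (isZero_zero _)) h

lemma of_acyclic_of_bounded (hQ : IsExactClass Q) (hK : K.Acyclic) (a : ℤ) (n : ℕ)
    [K.IsStrictlyGE a] [K.IsStrictlyLE (a + n)] : Q K := by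
  induction n generalizing K with
  | zero =>
    have : K.IsStrictlyLE (a + 1) := K.isStrictlyLE_of_le (a + (0 : ℕ)) (a + 1) (by simp)
    exact hQ.of_homotopy_zero (nonempty_homotopy_zero_of_acyclic hK a).some
  | succ n ih =>
    have : K.IsStrictlyLE (a + n + 1) := K.isStrictlyLE_of_le (a + (n + 1 : ℕ)) _ (by lia)
    exact hQ.of_shortExact₂ (K.shortComplexTruncLE_shortExact (a + n))
      (ih (K := K.truncLE (a + n)) (hK.truncLE _))
      (hQ.of_homotopy_zero
        (nonempty_homotopy_zero_of_acyclic (acyclic_shortComplexTruncLE_X₃ hK _) (a + n)).some)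

lemma of_acyclic_of_isStrictlyGE [HasColimitsOfShape (Discrete ℕ) A]
    [Q.IsClosedUnderColimitsOfShape (Discrete ℕ)] (hQ : IsExactClass Q) (hK : K.Acyclic) (a : ℤ)
    [K.IsStrictlyGE a] : Q K := by
  let F := Functor.ofSequence (truncLESucc K)
  have hcoprod : Q (∐ F.obj) := Q.prop_colimit _ fun ⟨n⟩ => by
    have : (K.truncLE n).IsStrictlyLE (a + (n - a).toNat) :=
      (K.truncLE n).isStrictlyLE_of_le n _ (by lia)
    exact hQ.of_acyclic_of_bounded (K := K.truncLE n) (hK.truncLE _) a (n - a).toNat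
  refine hQ.of_shortExact₃ (telescope_shortExact (coproductIsCoproduct F.obj) (truncLECocone K)
    fun i => ?_) hcoprod hcoprod
  exact ⟨i.toNat + 1, fun n hn => isIso_ιTruncLE_f_of_lt K (by lia)⟩

open CochainComplex

lemma op (hQ : IsExactClass Q) : IsExactClass (Q.op.inverseImage (opEquivalence A).inverse) where
  of_homotopy_zero {K} h := by
    let e := (opEquivalence A).counitIso.app K
    have h' : Homotopy (𝟙 ((opEquivalence A).functor.obj ((opEquivalence A).inverse.obj K))) 0 :=
      (Homotopy.ofEq (by simp [e])).trans
       (((h.compLeft e.hom).compRight e.inv).trans (Homotopy.ofEq (by simp)))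
    exact hQ.of_homotopy_zero (homotopyUnop
      ((Homotopy.ofEq (by simp)).trans (h'.trans (Homotopy.ofEq (by simp)))))
  of_shortExact₁ hS h₂ h₃ :=
    hQ.of_shortExact₃ (hS.map_of_exact (opEquivalence A).inverse).unop h₃ h₂
  of_shortExact₂ hS h₁ h₃ :=
    hQ.of_shortExact₂ (hS.map_of_exact (opEquivalence A).inverse).unop h₃ h₁
  of_shortExact₃ hS h₁ h₂ :=
    hQ.of_shortExact₁ (hS.map_of_exact (opEquivalence A).inverse).unop h₂ h₁

lemma of_acyclic_of_isStrictlyLE [HasLimitsOfShape (Discrete ℕ) A]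
    [Q.IsClosedUnderLimitsOfShape (Discrete ℕ)] (hQ : IsExactClass Q) (hK : K.Acyclic) (b : ℤ)
    [K.IsStrictlyLE b] : Q K := by
  have : HasLimitsOfShape (Discrete ℕ)ᵒᵖ A :=
    hasLimitsOfShape_of_equivalence (Discrete.opposite ℕ).symm
  have : HasColimitsOfShape (Discrete ℕ) Aᵒᵖ := hasColimitsOfShape_op_of_hasLimitsOfShape
  have : Q.IsClosedUnderLimitsOfShape (Discrete ℕ)ᵒᵖ :=
    .of_equivalence (Discrete.opposite ℕ).symm
  have : ((opEquivalence A).functor.obj (.op K)).IsStrictlyGE (-b) := by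
    rw [isStrictlyGE_iff]
    intro i hi
    exact (K.isZero_of_isStrictlyLE b (-i) (by lia)).op
  have h := hQ.op.of_acyclic_of_isStrictlyGE (acyclic_op hK) (-b)
  exact hQ.of_iso ((opEquivalence A).unitIso.app (.op K)).unop h

end IsExactClass

section TotClosed

variable {P : HomotopyCategory A (ComplexShape.up ℤ) → Prop}

lemma TotClosed.isClosedUnderIsomorphisms (hP : TotClosed P) :
    ObjectProperty.IsClosedUnderIsomorphisms P :=
  ⟨hP.iso⟩

open ZeroObject in
lemma TotClosed.isTriangulated (hP : TotClosed P) : ObjectProperty.IsTriangulated P :=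
  have := hP.isClosedUnderIsomorphisms
  { exists_zero := ⟨0, isZero_zero _, hP.zero _ (isZero_zero _)⟩
    isStableUnderShiftBy n := ⟨fun X hX => hP.shift X n hX⟩
    toIsTriangulatedClosed₂ := .mk' hP.ext₂ }

lemma TotClosed.mappingCone_descShortComplex (hP : TotClosed P)
    {S : ShortComplex (CochainComplex A ℤ)} (hS : S.ShortExact) :
    P ((HomotopyCategory.quotient A (ComplexShape.up ℤ)).obj (CochainComplex.mappingCone
      (CochainComplex.mappingCone.descShortComplex S))) :=
  hP.iso (((HomotopyCategory.quotient A (.up ℤ)).commShiftIso (1 : ℤ)).symm.app _ ≪≫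
      (HomotopyCategory.quotient A (.up ℤ)).mapIso
        ((shiftEquiv (CochainComplex A ℤ) (1 : ℤ)).counitIso.app _))
    (hP.shift _ 1 (hP.tot S.f S.g S.zero hS))

lemma TotClosed.isExactClass (hP : TotClosed P) :
    IsExactClass (ObjectProperty.inverseImage P (HomotopyCategory.quotient A (.up ℤ))) := by
  have := hP.isClosedUnderIsomorphisms
  have := hP.isTriangulated
  have cone {K L : CochainComplex A ℤ} (f : K ⟶ L) :=
    HomotopyCategory.mappingCone_triangleh_distinguished f
  exact {
    of_homotopy_zero h := hP.zero _ ((HomotopyCategory.isZero_quotient_obj_iff _).2 ⟨h⟩)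
    of_shortExact₁ {S} hS h₂ h₃ :=
      ObjectProperty.ext_of_isTriangulatedClosed₁ P _ (cone S.f) h₂
        (ObjectProperty.ext_of_isTriangulatedClosed₁ P _ (cone _) h₃
          (hP.mappingCone_descShortComplex hS))
    of_shortExact₂ {S} hS h₁ h₃ :=
      hP.ext₂ _ (cone S.f) h₁
        (ObjectProperty.ext_of_isTriangulatedClosed₁ P _ (cone _) h₃
          (hP.mappingCone_descShortComplex hS))
    of_shortExact₃ {S} hS h₁ h₂ :=
      hP.ext₂ _ (cone _)
        (ObjectProperty.ext_of_isTriangulatedClosed₃ P _ (cone S.f) h₁ h₂)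
        (hP.mappingCone_descShortComplex hS) }

lemma CoprodClosed.isClosedUnderColimitsOfShape (hP : CoprodClosed P) (J : Type v) :
    ObjectProperty.IsClosedUnderColimitsOfShape P (Discrete J) where
  colimitsOfShape_le := fun _ ⟨h⟩ =>
    hP _ _ ((IsColimit.precomposeInvEquiv Discrete.natIsoFunctor _).symm h.isColimit)
      fun j => h.prop_diag_obj ⟨j⟩

lemma ProdClosed.isClosedUnderLimitsOfShape (hP : ProdClosed P) (J : Type v) :
    ObjectProperty.IsClosedUnderLimitsOfShape P (Discrete J) where
  limitsOfShape_le := fun _ ⟨h⟩ =>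
    hP _ _ ((IsLimit.postcomposeHomEquiv Discrete.natIsoFunctor _).symm h.isLimit)
      fun j => h.prop_diag_obj ⟨j⟩

end TotClosed

variable {C : CochainComplex A ℤ}

lemma isCoacyclic_of_isStrictlyGE [HasColimitsOfShape (Discrete ℕ) A] (hC : C.Acyclic) (a : ℤ)
    [C.IsStrictlyGE a] : IsCoacyclic ((HomotopyCategory.quotient A (.up ℤ)).obj C) := by
  intro P hP hcoprod
  have := hcoprod.isClosedUnderColimitsOfShape (ULift.{v} ℕ)
  have : ObjectProperty.IsClosedUnderColimitsOfShape P (Discrete ℕ) :=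
    .of_equivalence (Discrete.equivalence (Equiv.ulift.{v} (α := ℕ)))
  exact hP.isExactClass.of_acyclic_of_isStrictlyGE hC a

lemma isContraacyclic_of_isStrictlyLE [HasLimitsOfShape (Discrete ℕ) A] (hC : C.Acyclic) (b : ℤ)
    [C.IsStrictlyLE b] : IsContraacyclic ((HomotopyCategory.quotient A (.up ℤ)).obj C) := by
  intro P hP hprod
  have := hprod.isClosedUnderLimitsOfShape (ULift.{v} ℕ)
  have : ObjectProperty.IsClosedUnderLimitsOfShape P (Discrete ℕ) :=
    .of_equivalence (Discrete.equivalence (Equiv.ulift.{v} (α := ℕ)))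
  exact hP.isExactClass.of_acyclic_of_isStrictlyLE hC b

theorem stmt_9_general [HasCountableCoproducts A] [HasCountableProducts A]
    (C : CochainComplex A ℤ) (hac : ∀ n, C.ExactAt n) :
    ((∃ N : ℤ, ∀ n, n < N → IsZero (C.X n)) →
      IsCoacyclic ((HomotopyCategory.quotient A (ComplexShape.up ℤ)).obj C)) ∧
    ((∃ N : ℤ, ∀ n, N < n → IsZero (C.X n)) →
      IsContraacyclic ((HomotopyCategory.quotient A (ComplexShape.up ℤ)).obj C)) := by
  constructor
  · rintro ⟨N, hN⟩
    have := (C.isStrictlyGE_iff N).2 hN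
    exact isCoacyclic_of_isStrictlyGE hac N
  · rintro ⟨N, hN⟩
    have := (C.isStrictlyLE_iff N).2 hN
    exact isContraacyclic_of_isStrictlyLE hac N

/-- In an abelian category with exact coproducts, any bounded below acyclic
complex is coacyclic; and in an abelian category with exact products, any bounded above
acyclic complex is contraacyclic. -/
theorem stmt_9 [HasCoproducts.{v} A] [AB4.{v} A] [HasProducts.{v} A] [AB4Star.{v} A]
    (C : CochainComplex A ℤ) (hac : ∀ n, C.ExactAt n) :
    ((∃ N : ℤ, ∀ n, n < N → IsZero (C.X n)) →
      IsCoacyclic ((HomotopyCategory.quotient A (ComplexShape.up ℤ)).obj C)) ∧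
    ((∃ N : ℤ, ∀ n, N < n → IsZero (C.X n)) →
      IsContraacyclic ((HomotopyCategory.quotient A (ComplexShape.up ℤ)).obj C)) :=
  stmt_9_general C hac
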